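/- Let θ ∈ (0,1). For i = 1, 2, let (Ȳ^i_t)_{t∈[0,T]} be mean-continuous families of Ê-integrable random variables with l_T ≤ Ê[ħ(T, Ȳ^i_T)] ≤ u_T, and let (Y^i, R^i) = BSP̂_l^u(Ȳ^i, ħ) (same data ħ, l, u for both). Write δ_θφ := (φ^1 − θφ^2)/(1−θ) and δ̃_θφ := (φ^2 − θφ^1)/(1−θ) for φ = Y, Ȳ. Then for every t ∈ [0,T] and every ω ∈ Ω: |δ_θY_t(ω)| ≤ C_0′(t,T,Ȳ^1,Ȳ^2) + |δ_θȲ_t(ω)| + 𝒞 · sup_{s∈[t,T]} Ê[|δ_θȲ_s|], and |δ̃_θY_t(ω)| ≤ C_0′(t,T,Ȳ^1,Ȳ^2) + |δ̃_θȲ_t(ω)| + 𝒞 · sup_{s∈[t,T]} Ê[|δ̃_θȲ_s|], where 𝒞 := 1 + 2c̄/c̲ and C_0′(t,T,Ȳ^1,Ȳ^2) := (2/c̲) sup_{s∈[t,T]} max(|l_s|,|u_s|) + (c̄/c̲) sup_{s∈[t,T]} max(|L_s(0)|,|U_s(0)|) + (2c̄(c̲+c̄)/c̲²) ( sup_{s∈[t,T]}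 Ê[|Ȳ^1_s|] + sup_{s∈[t,T]} Ê[|Ȳ^2_s|] ). -/

import Mathlib

open MeasureTheory Set Filter

/-- The sublinear expectation `Ê[X] = sup_{P ∈ Ps} ∫ X dP`. -/
noncomputable def sublinE {Ω : Type*} [MeasurableSpace Ω] (Ps : Set (Measure Ω)) (X : Ω → ℝ) : ℝ :=
  sSup ((fun P => ∫ ω, X ω ∂P) '' Ps)

/-- `X` is Ê-integrable: measurable, integrable w.r.t. each `P ∈ Ps`, and
`sup_{P ∈ Ps} ∫ |X| dP < ∞`. -/
def EIntegrable {Ω : Type*} [MeasurableSpace Ω] (Ps : Set (Measure Ω)) (X : Ω → ℝ) : Prop :=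
  Measurable X ∧ (∀ P ∈ Ps, Integrable X P) ∧ ∃ M : ℝ, ∀ P ∈ Ps, (∫ ω, |X ω| ∂P) ≤ M

/-- Assumption (H_r) on the barriers `l, u` and the running loss function `hb`,
with constants `0 < cl ≤ cu` and `Ch > 0`. -/
def HrAssumption {Ω : Type*} [MeasurableSpace Ω] (T cl cu Ch : ℝ)
    (l u : ℝ → ℝ) (hb : ℝ → Ω → ℝ → ℝ) : Prop :=
  0 < cl ∧ cl ≤ cu ∧ 0 < Ch ∧
  ContinuousOn l (Icc 0 T) ∧ ContinuousOn u (Icc 0 T) ∧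
  (∃ M : ℝ, ∀ t ∈ Icc (0:ℝ) T, |l t| ≤ M ∧ |u t| ≤ M) ∧
  (∃ ε > 0, ∀ t ∈ Icc (0:ℝ) T, ε ≤ u t - l t) ∧
  (∀ t y, Measurable fun ω => hb t ω y) ∧
  (∀ ε > 0, ∃ δ > 0, ∀ (ω : Ω) (t t' y y' : ℝ),
      |t - t'| + |y - y'| < δ → |hb t ω y - hb t' ω y'| < ε) ∧
  (∀ t ω, StrictMono (hb t ω)) ∧
  (∀ t ω y, |hb t ω y| ≤ Ch * (1 + |y|)) ∧
  (∀ t ω y y', cl * |y - y'| ≤ |hb t ω y - hb t ω y'| ∧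
    |hb t ω y - hb t ω y'| ≤ cu * |y - y'|)

/-- `H̄(t, x, X) = Ê[hb(t, x + X − Ê[X])]`. -/
noncomputable def Hbar {Ω : Type*} [MeasurableSpace Ω] (Ps : Set (Measure Ω))
    (hb : ℝ → Ω → ℝ → ℝ) (t x : ℝ) (X : Ω → ℝ) : ℝ :=
  sublinE Ps (fun ω => hb t ω (x + X ω - sublinE Ps X))

/-- A family `(S_t)_{t ∈ [0,T]}` of Ê-integrable random variables which is continuous in mean. -/
def MeanContinuous {Ω : Type*} [MeasurableSpace Ω] (Ps : Set (Measure Ω)) (T : ℝ)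
    (S : ℝ → Ω → ℝ) : Prop :=
  (∀ t ∈ Icc (0:ℝ) T, EIntegrable Ps (S t)) ∧
  ∀ t ∈ Icc (0:ℝ) T,
    Tendsto (fun s => sublinE Ps fun ω => |S s ω - S t ω|) (nhdsWithin t (Icc 0 T)) (nhds 0)

/-- The minimality (Skorokhod) condition in its equivalent increment form: `R` may only
increase on intervals where `φ` stays strictly below `u` and may only decrease on intervals
where `φ` stays strictly above `l`. -/
def MinimalityIncr (T : ℝ) (φ l u R : ℝ → ℝ) : Prop :=
  ∀ s t : ℝ, 0 ≤ s → s < t → t ≤ T →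
    ((∀ v, s < v → v ≤ t → φ v < u v) → R s ≤ R t) ∧
    ((∀ v, s < v → v ≤ t → l v < φ v) → R t ≤ R s)

/-- `(Y, R)` solves the backward Skorokhod problem with sublinear expectation for the data
`(Ybar, hb, l, u)`. -/
def IsBSPsol {Ω : Type*} [MeasurableSpace Ω] (Ps : Set (Measure Ω)) (T : ℝ)
    (hb : ℝ → Ω → ℝ → ℝ) (l u : ℝ → ℝ) (Ybar Y : ℝ → Ω → ℝ) (R : ℝ → ℝ) : Prop :=
  (∀ t ∈ Icc (0:ℝ) T, ∀ ω, Y t ω = Ybar t ω + R T - R t) ∧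
  (∀ t ∈ Icc (0:ℝ) T, l t ≤ sublinE Ps (fun ω => hb t ω (Y t ω)) ∧
    sublinE Ps (fun ω => hb t ω (Y t ω)) ≤ u t) ∧
  ContinuousOn R (Icc 0 T) ∧ BoundedVariationOn R (Icc 0 T) ∧ R 0 = 0 ∧
  MinimalityIncr T (fun v => sublinE Ps (fun ω => hb v ω (Y v ω))) l u R

lemma se_bdd {Ω : Type*} [MeasurableSpace Ω] {Ps : Set (Measure Ω)} {X : Ω → ℝ}
    (hX : EIntegrable Ps X) : BddAbove ((fun P => ∫ ω, X ω ∂P) '' Ps) := by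
  obtain ⟨_, hi, M, hM⟩ := hX
  refine ⟨M, ?_⟩
  rintro _ ⟨P, hP, rfl⟩
  exact (integral_mono (hi P hP) (hi P hP).abs (fun ω => le_abs_self _)).trans (hM P hP)

lemma se_int_le {Ω : Type*} [MeasurableSpace Ω] {Ps : Set (Measure Ω)} {X : Ω → ℝ}
    (hX : EIntegrable Ps X) {P : Measure Ω} (hP : P ∈ Ps) : ∫ ω, X ω ∂P ≤ sublinE Ps X :=
  le_csSup (se_bdd hX) ⟨P, hP, rfl⟩

lemma se_le {Ω : Type*} [MeasurableSpace Ω] {Ps : Set (Measure Ω)} (hPs : Ps.Nonempty)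
    (hprob : ∀ P ∈ Ps, IsProbabilityMeasure P) {f g k : Ω → ℝ} {c e : ℝ} (hc : 0 ≤ c)
    (hf : EIntegrable Ps f) (hg : EIntegrable Ps g) (hk : EIntegrable Ps k)
    (h : ∀ ω, f ω ≤ g ω + c * k ω + e) :
    sublinE Ps f ≤ sublinE Ps g + c * sublinE Ps k + e := by
  refine csSup_le (hPs.image _) ?_
  rintro _ ⟨P, hP, rfl⟩
  have := hprob P hP
  have h1 : ∫ ω, f ω ∂P ≤ ∫ ω, (g ω + c * k ω + e) ∂P :=
    integral_mono (hf.2.1 P hP)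
      (((hg.2.1 P hP).add ((hk.2.1 P hP).const_mul c)).add (integrable_const e)) h
  have h2 : ∫ ω, (g ω + c * k ω + e) ∂P = ∫ ω, g ω ∂P + c * ∫ ω, k ω ∂P + e := by
    have i0 : Integrable (fun ω => g ω + c * k ω) P :=
      (hg.2.1 P hP).add ((hk.2.1 P hP).const_mul c)
    rw [integral_add i0 (integrable_const e),
      integral_add (hg.2.1 P hP) ((hk.2.1 P hP).const_mul c), integral_const_mul]
    simp
  have h3 := se_int_le hg hP
  have h4 := mul_le_mul_of_nonneg_left (se_int_le hk hP) hc
  show ∫ ω, f ω ∂P ≤ _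
  linarith

lemma se_const {Ω : Type*} [MeasurableSpace Ω] {Ps : Set (Measure Ω)} (hPs : Ps.Nonempty)
    (hprob : ∀ P ∈ Ps, IsProbabilityMeasure P) (c : ℝ) : sublinE Ps (fun _ => c) = c := by
  have : (fun P : Measure Ω => ∫ _ω, c ∂P) '' Ps = {c} := by
    ext x
    constructor
    · rintro ⟨P, hP, rfl⟩
      have := hprob P hP
      simp
    · rintro rfl
      obtain ⟨P, hP⟩ := hPs
      have := hprob P hP
      exact ⟨P, hP, by simp⟩
  rw [sublinE, this, csSup_singleton]

/-- domination gives integrability -/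
lemma ei_of_le {Ω : Type*} [MeasurableSpace Ω] {Ps : Set (Measure Ω)}
    (hprob : ∀ P ∈ Ps, IsProbabilityMeasure P) {f k : Ω → ℝ} {c e : ℝ} (hc : 0 ≤ c)
    (hf : Measurable f) (hk : EIntegrable Ps k) (h : ∀ ω, |f ω| ≤ c * |k ω| + e) :
    EIntegrable Ps f := by
  have hint : ∀ P ∈ Ps, Integrable f P := by
    intro P hP
    have := hprob P hP
    refine Integrable.mono' (((hk.2.1 P hP).abs.const_mul c).add (integrable_const e))
      hf.aestronglyMeasurable (Eventually.of_forall ?_)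
    intro ω
    simpa using h ω
  refine ⟨hf, hint, ?_⟩
  obtain ⟨M, hM⟩ := hk.2.2
  refine ⟨c * M + e, ?_⟩
  intro P hP
  have := hprob P hP
  have h1 : ∫ ω, |f ω| ∂P ≤ ∫ ω, (c * |k ω| + e) ∂P :=
    integral_mono (hint P hP).abs (((hk.2.1 P hP).abs.const_mul c).add (integrable_const e)) h
  have h2 : ∫ ω, (c * |k ω| + e) ∂P = c * ∫ ω, |k ω| ∂P + e := by
    rw [integral_add ((hk.2.1 P hP).abs.const_mul c) (integrable_const e), integral_const_mul]
    simp
  have := mul_le_mul_of_nonneg_left (hM P hP) hc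
  linarith

lemma ei_abs {Ω : Type*} [MeasurableSpace Ω] {Ps : Set (Measure Ω)} {X : Ω → ℝ}
    (hX : EIntegrable Ps X) : EIntegrable Ps (fun ω => |X ω|) :=
  ⟨hX.1.abs, fun P hP => (hX.2.1 P hP).abs, by simpa using hX.2.2⟩

lemma ei_lin {Ω : Type*} [MeasurableSpace Ω] {Ps : Set (Measure Ω)}
    (hprob : ∀ P ∈ Ps, IsProbabilityMeasure P) {X Y : Ω → ℝ}
    (hX : EIntegrable Ps X) (hY : EIntegrable Ps Y) (a b c : ℝ) :
    EIntegrable Ps (fun ω => a * X ω + b * Y ω + c) := by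
  have hint : ∀ P ∈ Ps, Integrable (fun ω => a * X ω + b * Y ω + c) P := by
    intro P hP
    have := hprob P hP
    exact (((hX.2.1 P hP).const_mul a).add ((hY.2.1 P hP).const_mul b)).add (integrable_const c)
  refine ⟨((hX.1.const_mul a).add (hY.1.const_mul b)).add_const c, hint, ?_⟩
  obtain ⟨M, hM⟩ := hX.2.2
  obtain ⟨N, hN⟩ := hY.2.2
  refine ⟨|a| * M + |b| * N + |c|, ?_⟩
  intro P hP
  have := hprob P hP
  have i1 := (hX.2.1 P hP).abs.const_mul |a|
  have i2 := (hY.2.1 P hP).abs.const_mul |b|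
  have h1 : ∫ ω, |a * X ω + b * Y ω + c| ∂P ≤ ∫ ω, (|a| * |X ω| + |b| * |Y ω| + |c|) ∂P := by
    refine integral_mono (hint P hP).abs ((i1.add i2).add (integrable_const _)) ?_
    intro ω
    show |a * X ω + b * Y ω + c| ≤ |a| * |X ω| + |b| * |Y ω| + |c|
    rw [← abs_mul, ← abs_mul]
    exact abs_add_three _ _ _
  have h2 : ∫ ω, (|a| * |X ω| + |b| * |Y ω| + |c|) ∂P
      = |a| * ∫ ω, |X ω| ∂P + |b| * ∫ ω, |Y ω| ∂P + |c| := by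
    have i0 : Integrable (fun ω => |a| * |X ω| + |b| * |Y ω|) P := i1.add i2
    rw [integral_add i0 (integrable_const _), integral_add i1 i2, integral_const_mul,
      integral_const_mul]
    simp
  have := mul_le_mul_of_nonneg_left (hM P hP) (abs_nonneg a)
  have := mul_le_mul_of_nonneg_left (hN P hP) (abs_nonneg b)
  linarith

lemma ei_const {Ω : Type*} [MeasurableSpace Ω] {Ps : Set (Measure Ω)}
    (hprob : ∀ P ∈ Ps, IsProbabilityMeasure P) (c : ℝ) : EIntegrable Ps (fun _ => c) := by
  refine ⟨measurable_const, fun P hP => ?_, |c|, fun P hP => ?_⟩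
  · have := hprob P hP
    exact integrable_const c
  · have := hprob P hP
    simp

lemma se_abs_nonneg {Ω : Type*} [MeasurableSpace Ω] {Ps : Set (Measure Ω)} (X : Ω → ℝ) :
    0 ≤ sublinE Ps (fun ω => |X ω|) := by
  apply Real.sSup_nonneg
  rintro _ ⟨P, _, rfl⟩
  exact integral_nonneg fun ω => abs_nonneg _

lemma hr_ei {Ω : Type*} [MeasurableSpace Ω] {Ps : Set (Measure Ω)}
    (hprob : ∀ P ∈ Ps, IsProbabilityMeasure P) {T cl cu Ch : ℝ} {l u : ℝ → ℝ}
    {hb : ℝ → Ω → ℝ → ℝ} (hHr : HrAssumption T cl cu Ch l u hb) {X : Ω → ℝ}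
    (hX : EIntegrable Ps X) (t : ℝ) : EIntegrable Ps (fun ω => hb t ω (X ω)) := by
  obtain ⟨_, _, hCh, _, _, _, _, hmeas, hunif, _, hgr, _⟩ := hHr
  refine ei_of_le hprob hCh.le (e := Ch) ?_ hX ?_
  · have hcont : ∀ ω, Continuous (hb t ω) := by
      intro ω
      rw [Metric.continuous_iff]
      intro y ε hε
      obtain ⟨δ, hδ, h⟩ := hunif ε hε
      refine ⟨δ, hδ, fun a ha => ?_⟩
      rw [Real.dist_eq] at ha ⊢
      exact h ω t t a y (by simpa using ha)
    have := measurable_uncurry_of_continuous_of_measurable (u := fun y ω => hb t ω y) hcont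
      (fun y => hmeas t y)
    exact this.comp (hX.1.prodMk measurable_id)
  · intro ω
    have := hgr t ω (X ω)
    linarith

lemma hr_cmp {Ω : Type*} [MeasurableSpace Ω] {Ps : Set (Measure Ω)} (hPs : Ps.Nonempty)
    (hprob : ∀ P ∈ Ps, IsProbabilityMeasure P) {T cl cu Ch : ℝ} {l u : ℝ → ℝ}
    {hb : ℝ → Ω → ℝ → ℝ} (hHr : HrAssumption T cl cu Ch l u hb) {X W : Ω → ℝ}
    (hX : EIntegrable Ps X) (hW : EIntegrable Ps W) (t d : ℝ) :
    (sublinE Ps (fun ω => hb t ω (X ω + d)) ≤ sublinE Ps (fun ω => hb t ω (W ω)) →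
      d ≤ cu / cl * sublinE Ps (fun ω => |X ω - W ω|)) ∧
    (sublinE Ps (fun ω => hb t ω (W ω)) ≤ sublinE Ps (fun ω => hb t ω (X ω + d)) →
      -d ≤ cu / cl * sublinE Ps (fun ω => |X ω - W ω|)) := by
  have hXd : EIntegrable Ps (fun ω => X ω + d) := by simpa using ei_lin hprob hX hX 1 0 d
  have hXW : EIntegrable Ps (fun ω => |X ω - W ω|) := by
    have := ei_abs (ei_lin hprob hX hW 1 (-1) 0)
    simpa [sub_eq_add_neg] using this
  have e1 := hr_ei hprob hHr hXd t
  have e2 := hr_ei hprob hHr hW t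
  have hE := se_abs_nonneg (Ps := Ps) (fun ω => X ω - W ω)
  obtain ⟨hcl, hcu, hCh, _, _, _, _, hmeas, hunif, hmono, hgr, hlip⟩ := hHr
  have hcu0 : 0 ≤ cu := hcl.le.trans hcu
  have hK : 0 ≤ cu / cl * sublinE Ps (fun ω => |X ω - W ω|) := by positivity
  constructor
  · intro h
    by_cases hd : d ≤ 0
    · linarith
    push Not at hd
    have := se_le hPs hprob (e := -(cl * d)) hcu0 e2 e1 hXW (by
      intro ω
      have h1 := (hlip t ω (X ω) (W ω)).2
      have h2 := (hlip t ω (X ω + d) (X ω)).1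
      have h3 := hmono t ω (show X ω < X ω + d by linarith)
      rw [abs_of_pos (by linarith), abs_of_pos (by linarith)] at h2
      have h4 := neg_abs_le (hb t ω (X ω) - hb t ω (W ω))
      linarith)
    rw [div_mul_eq_mul_div, le_div_iff₀ hcl]
    linarith
  · intro h
    by_cases hd : 0 ≤ d
    · linarith
    push Not at hd
    have := se_le hPs hprob (e := (cl * d)) hcu0 e1 e2 hXW (by
      intro ω
      have h1 := (hlip t ω (X ω) (W ω)).2
      have h2 := (hlip t ω (X ω) (X ω + d)).1
      have h3 := hmono t ω (show X ω + d < X ω by linarith)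
      rw [abs_of_pos (by linarith), abs_of_pos (by linarith)] at h2
      have h4 := le_abs_self (hb t ω (X ω) - hb t ω (W ω))
      linarith)
    rw [div_mul_eq_mul_div, le_div_iff₀ hcl]
    linarith

lemma first_time {D : ℝ → ℝ} {t T k : ℝ} (htT : t ≤ T) (hD : ContinuousOn D (Icc t T))
    (hDT : D T ≤ k)
    (h : ∀ s, t < s → s ≤ T → (∀ v, t < v → v ≤ s → k < D v) → D t ≤ D s) : D t ≤ k := by
  by_contra hlt
  push Not at hlt
  obtain ⟨c, hc1, hc2⟩ := exists_between hlt
  have hne : (Icc t T ∩ D ⁻¹' {c}).Nonempty := by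
    obtain ⟨x, hx, hx2⟩ := intermediate_value_Icc' htT hD ⟨hDT.trans hc1.le, hc2.le⟩
    exact ⟨x, hx, hx2⟩
  have hcl : IsCompact (Icc t T ∩ D ⁻¹' {c}) :=
    isCompact_Icc.of_isClosed_subset (hD.preimage_isClosed_of_isClosed isClosed_Icc
      isClosed_singleton) inter_subset_left
  obtain ⟨τ, ⟨hτ, hDτ⟩, hmin⟩ := hcl.exists_isLeast hne
  have hDτ' : D τ = c := hDτ
  have htτ : t < τ := by
    rcases hτ.1.lt_or_eq with h1 | h1
    · exact h1
    · rw [← h1] at hDτ'; linarith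
  have := h τ htτ hτ.2 (by
    intro v hv1 hv2
    by_contra hv
    push Not at hv
    obtain ⟨x, hx, hx2⟩ := intermediate_value_Icc' hv1.le
      (hD.mono (Icc_subset_Icc_right (hv2.trans hτ.2))) ⟨hv.trans hc1.le, hc2.le⟩
    have hxτ := hmin (show x ∈ Icc t T ∩ D ⁻¹' {c} from ⟨⟨hx.1, hx.2.trans (hv2.trans hτ.2)⟩, hx2⟩)
    have : v = τ := le_antisymm hv2 (hxτ.trans hx.2)
    rw [this] at hv
    linarith)
  linarith

lemma mc_bdd {Ω : Type*} [MeasurableSpace Ω] {Ps : Set (Measure Ω)} (hPs : Ps.Nonempty)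
    (hprob : ∀ P ∈ Ps, IsProbabilityMeasure P) {T : ℝ} {S : ℝ → Ω → ℝ}
    (hS : MeanContinuous Ps T S) :
    BddAbove ((fun s => sublinE Ps fun ω' => |S s ω'|) '' Icc 0 T) := by
  apply isCompact_Icc.bddAbove_image
  intro t ht
  have h0 := hS.2 t ht
  show Tendsto _ _ _
  rw [tendsto_iff_dist_tendsto_zero]
  refine squeeze_zero' (Eventually.of_forall fun _ => dist_nonneg) ?_ h0
  filter_upwards [self_mem_nhdsWithin] with s hs
  have e1 := ei_abs (hS.1 s hs)
  have e2 := ei_abs (hS.1 t ht)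
  have e3 : EIntegrable Ps (fun ω => |S s ω - S t ω|) := by
    have := ei_abs (ei_lin hprob (hS.1 s hs) (hS.1 t ht) 1 (-1) 0)
    simpa [sub_eq_add_neg] using this
  have a1 := se_le hPs hprob (e := 0) zero_le_one e1 e2 e3 (by
    intro ω
    have := abs_sub_abs_le_abs_sub (S s ω) (S t ω)
    linarith)
  have a2 := se_le hPs hprob (e := 0) zero_le_one e2 e1 e3 (by
    intro ω
    have := abs_sub_abs_le_abs_sub (S t ω) (S s ω)
    rw [abs_sub_comm (S t ω)] at this
    linarith)
  rw [Real.dist_eq, abs_le]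
  constructor <;> linarith

lemma half {Ω : Type*} [MeasurableSpace Ω] (T cl cu Ch : ℝ)
    (Ps : Set (Measure Ω)) (hPs : Ps.Nonempty) (hprob : ∀ P ∈ Ps, IsProbabilityMeasure P)
    (l u : ℝ → ℝ) (hb : ℝ → Ω → ℝ → ℝ) (hHr : HrAssumption T cl cu Ch l u hb)
    (L U : ℝ → (Ω → ℝ) → ℝ)
    (hL : ∀ t ∈ Icc (0:ℝ) T, ∀ X : Ω → ℝ, EIntegrable Ps X → Hbar Ps hb t (L t X) X = l t)
    (hU : ∀ t ∈ Icc (0:ℝ) T, ∀ X : Ω → ℝ, EIntegrable Ps X → Hbar Ps hb t (U t X) X = u t)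
    (θ : ℝ) (hθ : θ ∈ Ioo (0:ℝ) 1)
    (Ybar1 Ybar2 : ℝ → Ω → ℝ)
    (hYbar1 : MeanContinuous Ps T Ybar1) (hYbar2 : MeanContinuous Ps T Ybar2)
    (Y1 Y2 : ℝ → Ω → ℝ) (R1 R2 : ℝ → ℝ)
    (hsol1 : IsBSPsol Ps T hb l u Ybar1 Y1 R1)
    (hsol2 : IsBSPsol Ps T hb l u Ybar2 Y2 R2) (t : ℝ) (ht : t ∈ Icc (0:ℝ) T) (ω : Ω) :
      (|(Y1 t ω - θ * Y2 t ω) / (1 - θ)| ≤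
        ((2 / cl) * sSup ((fun s => max |l s| |u s|) '' Icc t T) +
          (cu / cl) * sSup ((fun s => max |L s (fun _ => 0)| |U s (fun _ => 0)|) '' Icc t T) +
          (2 * cu * (cl + cu) / cl ^ 2) *
            (sSup ((fun s => sublinE Ps fun ω' => |Ybar1 s ω'|) '' Icc t T) +
              sSup ((fun s => sublinE Ps fun ω' => |Ybar2 s ω'|) '' Icc t T))) +
        |(Ybar1 t ω - θ * Ybar2 t ω) / (1 - θ)| +
        (1 + 2 * cu / cl) *
          sSup ((fun s => sublinE Ps fun ω' =>
            |(Ybar1 s ω' - θ * Ybar2 s ω') / (1 - θ)|) '' Icc t T)) := by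
  have hcl : 0 < cl := hHr.1
  have hcu : 0 < cu := hHr.1.trans_le hHr.2.1
  have hθ1 : 0 < 1 - θ := by linarith [hθ.2]
  have hsub : Icc t T ⊆ Icc 0 T := Icc_subset_Icc_left ht.1
  set q := cu / cl with hq
  have hq0 : 0 < q := div_pos hcu hcl
  have hze := ei_const hprob (Ps := Ps) 0
  -- the barriers at the zero random variable
  have hL0 : ∀ s ∈ Icc (0:ℝ) T, sublinE Ps (fun ω => hb s ω (L s (fun _ => 0))) = l s := by
    intro s hs
    have := hL s hs _ hze
    rw [Hbar, se_const hPs hprob] at this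
    simpa using this
  have hU0 : ∀ s ∈ Icc (0:ℝ) T, sublinE Ps (fun ω => hb s ω (U s (fun _ => 0))) = u s := by
    intro s hs
    have := hU s hs _ hze
    rw [Hbar, se_const hPs hprob] at this
    simpa using this
  -- boundedness of the constant crossing a bounded level
  have hlev : ∀ s x : ℝ, |x| ≤ (|sublinE Ps (fun ω => hb s ω x)| + Ch) / cl := by
    intro s x
    have e1 := hr_ei hprob hHr (ei_const hprob (Ps := Ps) x) s
    obtain ⟨_, _, hCh, _, _, _, _, hmeas, hunif, hmono, hgr, hlip⟩ := hHr
    rw [le_div_iff₀ hcl]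
    have hg0 : ∀ ω, |hb s ω 0| ≤ Ch := fun ω => by simpa using hgr s ω 0
    rcases le_total 0 x with hx | hx
    · have := se_le hPs hprob (c := 0) (f := fun _ => cl * x) (e := Ch) le_rfl
        (ei_const hprob _) e1 hze (by
          intro ω
          have h1 := (hlip s ω x 0).1
          have h2 := (hmono s ω).monotone hx
          rw [sub_zero, abs_of_nonneg hx, abs_of_nonneg (by linarith)] at h1
          have h3 := neg_abs_le (hb s ω 0)
          linarith [hg0 ω])
      rw [se_const hPs hprob] at this
      rw [abs_of_nonneg hx]
      have := le_abs_self (sublinE Ps (fun ω => hb s ω x))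
      linarith
    · have := se_le hPs hprob (c := 0) (g := fun _ => cl * x) (e := Ch) le_rfl
        e1 (ei_const hprob _) hze (by
          intro ω
          have h1 := (hlip s ω 0 x).1
          have h2 := (hmono s ω).monotone hx
          rw [zero_sub, abs_neg, abs_of_nonpos hx, abs_of_nonneg (by linarith)] at h1
          have h3 := le_abs_self (hb s ω 0)
          linarith [hg0 ω])
      rw [se_const hPs hprob] at this
      rw [abs_of_nonpos hx]
      have := neg_abs_le (sublinE Ps (fun ω => hb s ω x))
      linarith
  have hbM : BddAbove ((fun s => max |L s (fun _ => 0)| |U s (fun _ => 0)|) '' Icc t T) := by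
    obtain ⟨M, hM⟩ := hHr.2.2.2.2.2.1
    refine ⟨(M + Ch) / cl, ?_⟩
    rintro _ ⟨s, hs, rfl⟩
    have h1 := hlev s (L s (fun _ => 0))
    have h2 := hlev s (U s (fun _ => 0))
    rw [hL0 s (hsub hs)] at h1
    rw [hU0 s (hsub hs)] at h2
    have h3 := hM s (hsub hs)
    refine max_le (h1.trans ?_) (h2.trans ?_)
    · gcongr; exact h3.1
    · gcongr; exact h3.2
  have hb1 := mc_bdd hPs hprob hYbar1
  have hb2 := mc_bdd hPs hprob hYbar2
  have hb2' := hb2.mono (image_mono hsub)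
  have heδ : ∀ s ∈ Icc (0:ℝ) T,
      EIntegrable Ps (fun ω' => (Ybar1 s ω' - θ * Ybar2 s ω') / (1 - θ)) := by
    intro s hs
    have := ei_lin hprob (hYbar1.1 s hs) (hYbar2.1 s hs) (1 / (1 - θ)) (-θ / (1 - θ)) 0
    convert this using 2
    ring
  have hbδ : BddAbove ((fun s => sublinE Ps fun ω' =>
            |(Ybar1 s ω' - θ * Ybar2 s ω') / (1 - θ)|) '' Icc t T) := by
    obtain ⟨M, hM⟩ := hb1
    obtain ⟨N, hN⟩ := hb2
    refine ⟨0 + 1 / (1 - θ) * (M + 1 * N + 0) + 0, ?_⟩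
    rintro _ ⟨s, hs, rfl⟩
    have hs' := hsub hs
    have e1 := ei_abs (hYbar1.1 s hs')
    have e2 := ei_abs (hYbar2.1 s hs')
    have e3 : EIntegrable Ps (fun ω => |Ybar1 s ω| + |Ybar2 s ω|) := by
      simpa using ei_lin hprob e1 e2 1 1 0
    have a1 := se_le hPs hprob (c := 1 / (1 - θ)) (e := 0) (by positivity) (ei_abs (heδ s hs'))
      hze e3 (by
        intro ω
        rw [abs_div, abs_of_pos hθ1, zero_add, add_zero, div_mul_eq_mul_div, one_mul]
        gcongr
        have := abs_sub (Ybar1 s ω) (θ * Ybar2 s ω)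
        rw [abs_mul, abs_of_pos hθ.1] at this
        have := mul_le_of_le_one_left (abs_nonneg (Ybar2 s ω)) hθ.2.le
        linarith)
    have a2 := se_le hPs hprob (e := 0) zero_le_one e3 e1 e2 (by intro ω; linarith)
    rw [se_const hPs hprob] at a1
    refine a1.trans ?_
    have := hM ⟨s, hs', rfl⟩
    have := hN ⟨s, hs', rfl⟩
    gcongr
    simp only at *
    linarith
  set Ml := sSup ((fun s => max |l s| |u s|) '' Icc t T)
  set M0 := sSup ((fun s => max |L s (fun _ => 0)| |U s (fun _ => 0)|) '' Icc t T)
  set S1 := sSup ((fun s => sublinE Ps fun ω' => |Ybar1 s ω'|) '' Icc t T)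
  set S2 := sSup ((fun s => sublinE Ps fun ω' => |Ybar2 s ω'|) '' Icc t T)
  set Sδ := sSup ((fun s => sublinE Ps fun ω' =>
            |(Ybar1 s ω' - θ * Ybar2 s ω') / (1 - θ)|) '' Icc t T)
  have hMl : 0 ≤ Ml := by
    apply Real.sSup_nonneg
    rintro _ ⟨s, _, rfl⟩
    positivity
  have hS1 : 0 ≤ S1 := by
    apply Real.sSup_nonneg
    rintro _ ⟨s, _, rfl⟩
    exact se_abs_nonneg _
  have hS2 : 0 ≤ S2 := by
    apply Real.sSup_nonneg
    rintro _ ⟨s, _, rfl⟩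
    exact se_abs_nonneg _
  have hSδ : 0 ≤ Sδ := by
    apply Real.sSup_nonneg
    rintro _ ⟨s, _, rfl⟩
    exact se_abs_nonneg (fun ω' => (Ybar1 s ω' - θ * Ybar2 s ω') / (1 - θ))
  have hM0 : 0 ≤ M0 := by
    apply Real.sSup_nonneg
    rintro _ ⟨s, _, rfl⟩
    positivity
  obtain ⟨hY1, hφ1, hc1, -, -, hmin1⟩ := hsol1
  obtain ⟨hY2, hφ2, hc2, -, -, hmin2⟩ := hsol2
  set φ1 := fun v => sublinE Ps (fun ω => hb v ω (Y1 v ω)) with hφ1d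
  set φ2 := fun v => sublinE Ps (fun ω => hb v ω (Y2 v ω)) with hφ2d
  set D : ℝ → ℝ := fun v => (R1 T - R1 v) - θ * (R2 T - R2 v) with hDdef
  set K := q * (Sδ + S2 + (M0 + q * S2)) with hK
  have hK0 : 0 ≤ K := by positivity
  have hkey : ∀ v ∈ Icc t T, (φ1 v ≤ φ2 v → D v ≤ (1 - θ) * K) ∧
      (φ2 v ≤ φ1 v → -D v ≤ (1 - θ) * K) := by
    intro v hv
    have hv' := hsub hv
    have e1 := hYbar1.1 v hv'
    have e2 := hYbar2.1 v hv'
    set A2 := R2 T - R2 v with hA2d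
    have bS2 : sublinE Ps (fun ω' => |Ybar2 v ω'|) ≤ S2 := le_csSup hb2' ⟨v, hv, rfl⟩
    have bSδ : sublinE Ps (fun ω' => |(Ybar1 v ω' - θ * Ybar2 v ω') / (1 - θ)|) ≤ Sδ :=
      le_csSup hbδ ⟨v, hv, rfl⟩
    have bM0 : max |L v (fun _ => 0)| |U v (fun _ => 0)| ≤ M0 := le_csSup hbM ⟨v, hv, rfl⟩
    have hφ2v : ∀ x : ℝ, φ2 v = sublinE Ps (fun ω => hb v ω ((Ybar2 v ω + x) + (A2 - x))) := by
      intro x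
      simp only [hφ2d]
      congr 1; ext ω
      rw [hY2 v hv' ω]; congr 1; rw [hA2d]; ring
    have ex : ∀ x : ℝ, EIntegrable Ps (fun ω => Ybar2 v ω + x) := fun x => by
      simpa using ei_lin hprob e2 e2 1 0 x
    have hA2 : |A2| ≤ M0 + q * S2 := by
      have a1 := (hr_cmp hPs hprob hHr (ex (U v (fun _ => 0)))
        (ei_const hprob (U v (fun _ => 0))) v (A2 - U v (fun _ => 0))).1 (by
          rw [← hφ2v, hU0 v hv']; exact (hφ2 v hv').2)
      have a2 := (hr_cmp hPs hprob hHr (ex (L v (fun _ => 0)))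
        (ei_const hprob (L v (fun _ => 0))) v (A2 - L v (fun _ => 0))).2 (by
          rw [← hφ2v, hL0 v hv']; exact (hφ2 v hv').1)
      simp only [add_sub_cancel_right] at a1 a2
      have b := mul_le_mul_of_nonneg_left bS2 hq0.le
      have c1 := (le_abs_self (U v (fun _ => 0))).trans ((le_max_right _ _).trans bM0)
      have c2 := (neg_abs_le (L v (fun _ => 0)))
      have c3 := (le_max_left |L v (fun _ => 0)| _).trans bM0
      rw [abs_le]
      constructor <;> linarith
    have eX : EIntegrable Ps (fun ω => Ybar1 v ω + θ * A2) := by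
      simpa using ei_lin hprob e1 e1 1 0 (θ * A2)
    have hcmp := hr_cmp hPs hprob hHr eX (ex A2) v (D v)
    have hφ1v : φ1 v = sublinE Ps (fun ω => hb v ω (Ybar1 v ω + θ * A2 + D v)) := by
      simp only [hφ1d]
      congr 1; ext ω
      rw [hY1 v hv' ω]; congr 1; rw [hA2d, hDdef]; ring
    have hφ2v' : φ2 v = sublinE Ps (fun ω => hb v ω (Ybar2 v ω + A2)) := by
      have := hφ2v A2
      simpa using this
    rw [← hφ1v, ← hφ2v'] at hcmp
    have ed := ei_abs (heδ v hv')
    have e3 : EIntegrable Ps (fun ω => |(Ybar1 v ω - θ * Ybar2 v ω) / (1 - θ)| + |Ybar2 v ω|) := by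
      simpa using ei_lin hprob ed (ei_abs e2) 1 1 0
    have eXW : EIntegrable Ps (fun ω => |(Ybar1 v ω + θ * A2) - (Ybar2 v ω + A2)|) := by
      have := ei_abs (ei_lin hprob eX (ex A2) 1 (-1) 0)
      simpa only [one_mul, neg_mul, add_zero, ← sub_eq_add_neg] using this
    have b1 := se_le hPs hprob (e := (1 - θ) * |A2|) hθ1.le eXW hze e3 (by
      intro ω
      have : (Ybar1 v ω + θ * A2) - (Ybar2 v ω + A2)
          = (1 - θ) * ((Ybar1 v ω - θ * Ybar2 v ω) / (1 - θ) + -Ybar2 v ω + -A2) := by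
        field_simp
        ring
      rw [this, abs_mul, abs_of_pos hθ1]
      have h3 := abs_add_three ((Ybar1 v ω - θ * Ybar2 v ω) / (1 - θ)) (-Ybar2 v ω) (-A2)
      rw [abs_neg, abs_neg] at h3
      have := mul_le_mul_of_nonneg_left h3 hθ1.le
      linarith)
    have b2 := se_le hPs hprob (e := 0) zero_le_one e3 ed (ei_abs e2) (by intro ω; linarith)
    rw [se_const hPs hprob] at b1
    have b3 : sublinE Ps (fun ω => |(Ybar1 v ω + θ * A2) - (Ybar2 v ω + A2)|)
        ≤ (1 - θ) * (Sδ + S2 + (M0 + q * S2)) := by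
      refine b1.trans ?_
      have : sublinE Ps (fun ω => |(Ybar1 v ω - θ * Ybar2 v ω) / (1 - θ)| + |Ybar2 v ω|) + |A2|
        ≤ Sδ + S2 + (M0 + q * S2) := by linarith
      have := mul_le_mul_of_nonneg_left this hθ1.le
      linarith
    have b4 := mul_le_mul_of_nonneg_left b3 hq0.le
    have b5 : q * ((1 - θ) * (Sδ + S2 + (M0 + q * S2))) = (1 - θ) * K := by rw [hK]; ring
    rw [b5] at b4
    exact ⟨fun h => (hcmp.1 h).trans b4, fun h => (hcmp.2 h).trans b4⟩
  have hDT : D T = 0 := by simp [hDdef]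
  have hDc : ContinuousOn D (Icc t T) :=
    (continuousOn_const.sub (hc1.mono hsub)).sub
      (continuousOn_const.mul (continuousOn_const.sub (hc2.mono hsub)))
  have hup : D t ≤ (1 - θ) * K := by
    refine first_time ht.2 hDc (by rw [hDT]; positivity) ?_
    intro s hts hsT hk
    have m1 := (hmin1 t s ht.1 hts hsT).2 (by
      intro v hv1 hv2
      by_contra hc
      push Not at hc
      have hv : v ∈ Icc t T := ⟨hv1.le, hv2.trans hsT⟩
      have := (hkey v hv).1 (hc.trans (hφ2 v (hsub hv)).1)
      linarith [hk v hv1 hv2])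
    have m2 := (hmin2 t s ht.1 hts hsT).1 (by
      intro v hv1 hv2
      by_contra hc
      push Not at hc
      have hv : v ∈ Icc t T := ⟨hv1.le, hv2.trans hsT⟩
      have := (hkey v hv).1 ((hφ1 v (hsub hv)).2.trans hc)
      linarith [hk v hv1 hv2])
    have := mul_le_mul_of_nonneg_left m2 hθ.1.le
    simp only [hDdef]
    linarith
  have hlo : -D t ≤ (1 - θ) * K := by
    refine first_time (D := fun v => -D v) ht.2 hDc.neg (by simp only [hDT]; simp; positivity) ?_
    intro s hts hsT hk
    have m1 := (hmin1 t s ht.1 hts hsT).1 (by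
      intro v hv1 hv2
      by_contra hc
      push Not at hc
      have hv : v ∈ Icc t T := ⟨hv1.le, hv2.trans hsT⟩
      have := (hkey v hv).2 ((hφ2 v (hsub hv)).2.trans hc)
      linarith [hk v hv1 hv2])
    have m2 := (hmin2 t s ht.1 hts hsT).2 (by
      intro v hv1 hv2
      by_contra hc
      push Not at hc
      have hv : v ∈ Icc t T := ⟨hv1.le, hv2.trans hsT⟩
      have := (hkey v hv).2 (hc.trans (hφ1 v (hsub hv)).1)
      linarith [hk v hv1 hv2])
    have := mul_le_mul_of_nonneg_left m2 hθ.1.le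
    simp only [hDdef]
    linarith
  have hDabs : |D t / (1 - θ)| ≤ K := by
    rw [abs_div, abs_of_pos hθ1, div_le_iff₀ hθ1, abs_le]
    constructor <;> linarith
  have hsplit : (Y1 t ω - θ * Y2 t ω) / (1 - θ)
      = (Ybar1 t ω - θ * Ybar2 t ω) / (1 - θ) + D t / (1 - θ) := by
    rw [hY1 t ht ω, hY2 t ht ω, ← add_div]
    congr 1
    simp only [hDdef]
    ring
  have hfin : |(Y1 t ω - θ * Y2 t ω) / (1 - θ)|
      ≤ |(Ybar1 t ω - θ * Ybar2 t ω) / (1 - θ)| + K := by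
    rw [hsplit]
    exact (abs_add_le _ _).trans (by linarith)
  have hc4 : 2 * cu * (cl + cu) / cl ^ 2 = 2 * (q + q * q) := by
    rw [hq]; field_simp
  have hc5 : 2 * cu / cl = 2 * q := by rw [hq]; ring
  rw [hc4, hc5]
  have p1 : 0 ≤ 2 / cl * Ml := by positivity
  have p2 : 0 ≤ (q + q * q) * S1 := by positivity
  have p3 : 0 ≤ (q + q * q) * S2 := by positivity
  have p4 : 0 ≤ q * Sδ := by positivity
  rw [hK] at hfin
  nlinarith

/-- the `θ`-difference estimate: with `δ_θφ = (φ¹ − θφ²)/(1−θ)` and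
`δ̃_θφ = (φ² − θφ¹)/(1−θ)`, for every `t ∈ [0,T]` and `ω`,
`|δ_θY_t(ω)| ≤ C₀′ + |δ_θȲ_t(ω)| + 𝒞 sup_{s∈[t,T]} Ê[|δ_θȲ_s|]` and similarly for `δ̃_θ`,
where `𝒞 = 1 + 2c̄/c̲` and `C₀′` is as in Lemma 4.2. -/
theorem stmt12 {Ω : Type*} [MeasurableSpace Ω] (T cl cu Ch : ℝ) (hT : 0 < T)
    (Ps : Set (Measure Ω)) (hPs : Ps.Nonempty) (hprob : ∀ P ∈ Ps, IsProbabilityMeasure P)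
    (l u : ℝ → ℝ) (hb : ℝ → Ω → ℝ → ℝ) (hHr : HrAssumption T cl cu Ch l u hb)
    (L U : ℝ → (Ω → ℝ) → ℝ)
    (hL : ∀ t ∈ Icc (0:ℝ) T, ∀ X : Ω → ℝ, EIntegrable Ps X → Hbar Ps hb t (L t X) X = l t)
    (hU : ∀ t ∈ Icc (0:ℝ) T, ∀ X : Ω → ℝ, EIntegrable Ps X → Hbar Ps hb t (U t X) X = u t)
    (θ : ℝ) (hθ : θ ∈ Ioo (0:ℝ) 1)
    (Ybar1 Ybar2 : ℝ → Ω → ℝ)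
    (hYbar1 : MeanContinuous Ps T Ybar1) (hYbar2 : MeanContinuous Ps T Ybar2)
    (hterm1L : l T ≤ sublinE Ps fun ω => hb T ω (Ybar1 T ω))
    (hterm1U : (sublinE Ps fun ω => hb T ω (Ybar1 T ω)) ≤ u T)
    (hterm2L : l T ≤ sublinE Ps fun ω => hb T ω (Ybar2 T ω))
    (hterm2U : (sublinE Ps fun ω => hb T ω (Ybar2 T ω)) ≤ u T)
    (Y1 Y2 : ℝ → Ω → ℝ) (R1 R2 : ℝ → ℝ)
    (hsol1 : IsBSPsol Ps T hb l u Ybar1 Y1 R1)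
    (hsol2 : IsBSPsol Ps T hb l u Ybar2 Y2 R2) :
    ∀ t ∈ Icc (0:ℝ) T, ∀ ω : Ω,
      (|(Y1 t ω - θ * Y2 t ω) / (1 - θ)| ≤
        ((2 / cl) * sSup ((fun s => max |l s| |u s|) '' Icc t T) +
          (cu / cl) * sSup ((fun s => max |L s (fun _ => 0)| |U s (fun _ => 0)|) '' Icc t T) +
          (2 * cu * (cl + cu) / cl ^ 2) *
            (sSup ((fun s => sublinE Ps fun ω' => |Ybar1 s ω'|) '' Icc t T) +
              sSup ((fun s => sublinE Ps fun ω' => |Ybar2 s ω'|) '' Icc t T))) +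
        |(Ybar1 t ω - θ * Ybar2 t ω) / (1 - θ)| +
        (1 + 2 * cu / cl) *
          sSup ((fun s => sublinE Ps fun ω' =>
            |(Ybar1 s ω' - θ * Ybar2 s ω') / (1 - θ)|) '' Icc t T)) ∧
      (|(Y2 t ω - θ * Y1 t ω) / (1 - θ)| ≤
        ((2 / cl) * sSup ((fun s => max |l s| |u s|) '' Icc t T) +
          (cu / cl) * sSup ((fun s => max |L s (fun _ => 0)| |U s (fun _ => 0)|) '' Icc t T) +
          (2 * cu * (cl + cu) / cl ^ 2) *
            (sSup ((fun s => sublinE Ps fun ω' => |Ybar1 s ω'|) '' Icc t T) +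
              sSup ((fun s => sublinE Ps fun ω' => |Ybar2 s ω'|) '' Icc t T))) +
        |(Ybar2 t ω - θ * Ybar1 t ω) / (1 - θ)| +
        (1 + 2 * cu / cl) *
          sSup ((fun s => sublinE Ps fun ω' =>
            |(Ybar2 s ω' - θ * Ybar1 s ω') / (1 - θ)|) '' Icc t T)) := by
  intro t ht ω
  refine ⟨half T cl cu Ch Ps hPs hprob l u hb hHr L U hL hU θ hθ Ybar1 Ybar2 hYbar1 hYbar2
    Y1 Y2 R1 R2 hsol1 hsol2 t ht ω, ?_⟩
  rw [add_comm (sSup ((fun s => sublinE Ps fun ω' => |Ybar1 s ω'|) '' Icc t T))]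
  exact half T cl cu Ch Ps hPs hprob l u hb hHr L U hL hU θ hθ Ybar2 Ybar1 hYbar2 hYbar1
    Y2 Y1 R2 R1 hsol2 hsol1 t ht ω
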